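/- Suppose 0 < s₁ < s₂ ≤ 1 and let g be holomorphic on the unit disc D. Then the following are equivalent: (i) the operator I_g maps Q_{s₂} into Q_{s₁}; (ii) the multiplication operator M_g maps Q_{s₂} into Q_{s₁}; (iii) g is identically zero. -/

import Mathlib

open MeasureTheory Metric Complex Real Filter Set

noncomputable section

/-- `f` is holomorphic on the open unit disc. -/
def HolOn (f : ℂ → ℂ) : Prop := DifferentiableOn ℂ f (Metric.ball (0:ℂ) 1)

/-- The normalized Lebesgue area measure on `ℂ` (so the unit disc has total mass 1). -/
def dA : Measure ℂ := (ENNReal.ofReal π)⁻¹ • volume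

/-- Bounded holomorphic functions on the unit disc. -/
def Hinf : Set (ℂ → ℂ) :=
  {f | HolOn f ∧ ∃ C : ℝ, ∀ z ∈ Metric.ball (0:ℂ) 1, ‖f z‖ ≤ C}

/-- The Bloch space. -/
def Bloch : Set (ℂ → ℂ) :=
  {f | HolOn f ∧ ∃ C : ℝ, ∀ z ∈ Metric.ball (0:ℂ) 1,
      (1 - ‖z‖ ^ 2) * ‖deriv f z‖ ≤ C}

/-- The little Bloch space: `(1-|z|²)|f'(z)| → 0` as `|z| → 1⁻`. -/
def littleBloch : Set (ℂ → ℂ) :=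
  {f | HolOn f ∧ ∀ ε : ℝ, 0 < ε → ∃ r : ℝ, r < 1 ∧ ∀ z ∈ Metric.ball (0:ℂ) 1,
      r < ‖z‖ → (1 - ‖z‖ ^ 2) * ‖deriv f z‖ < ε}

/-- The `α`-logarithmic Bloch space. -/
def BlochLog (α : ℝ) : Set (ℂ → ℂ) :=
  {f | HolOn f ∧ ∃ C : ℝ, ∀ z ∈ Metric.ball (0:ℂ) 1,
      (1 - ‖z‖ ^ 2) * (Real.log (2 / (1 - ‖z‖ ^ 2))) ^ α *
        ‖deriv f z‖ ≤ C}

/-- The Besov space `B¹`: holomorphic `f` with `∫_D |f''| dA < ∞`. -/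
def Besov1 : Set (ℂ → ℂ) :=
  {f | HolOn f ∧ ∫⁻ z in Metric.ball (0:ℂ) 1,
      ENNReal.ofReal (‖deriv (deriv f) z‖) ∂dA < ⊤}

/-- The Besov space `Bᵖ` (`1 < p < ∞`): `∫_D (1-|z|)^(p-2) |f'(z)|^p dA(z) < ∞`. -/
def Besov (p : ℝ) : Set (ℂ → ℂ) :=
  {f | HolOn f ∧ ∫⁻ z in Metric.ball (0:ℂ) 1,
      ENNReal.ofReal ((1 - ‖z‖) ^ (p - 2) * ‖deriv f z‖ ^ p) ∂dA < ⊤}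

open scoped Classical in
/-- The Besov space `Bᵖ` for all `1 ≤ p < ∞` (with the special definition at `p = 1`). -/
def BesovFull (p : ℝ) : Set (ℂ → ℂ) := if p = 1 then Besov1 else Besov p

/-- The Möbius transformation `φ_a(z) = (a-z)/(1 - conj a · z)`. -/
def phi (a z : ℂ) : ℂ := (a - z) / (1 - (starRingEnd ℂ) a * z)

/-- The space `Q_s`. -/
def Qs (s : ℝ) : Set (ℂ → ℂ) :=
  {f | HolOn f ∧ ⨆ a ∈ Metric.ball (0:ℂ) 1, ∫⁻ z in Metric.ball (0:ℂ) 1,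
      ENNReal.ofReal (‖deriv f z‖ ^ 2 *
        (1 - ‖phi a z‖ ^ 2) ^ s) ∂dA < ⊤}

/-- The space `Q_{s,log,α}`. -/
def QsLog (s α : ℝ) : Set (ℂ → ℂ) :=
  {f | HolOn f ∧ ⨆ a ∈ Metric.ball (0:ℂ) 1,
      (ENNReal.ofReal ((Real.log (2 / (1 - ‖a‖))) ^ (2 * α)) *
        ∫⁻ z in Metric.ball (0:ℂ) 1,
          ENNReal.ofReal (‖deriv f z‖ ^ 2 *
            (1 - ‖phi a z‖ ^ 2) ^ s) ∂dA) < ⊤}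

/-- The Volterra operator `T_g(f)(z) = ∫_0^z g'(ξ) f(ξ) dξ` (along the segment from 0 to z). -/
def Tg (g f : ℂ → ℂ) : ℂ → ℂ :=
  fun z => z * ∫ t in (0:ℝ)..1, deriv g ((t : ℂ) * z) * f ((t : ℂ) * z)

/-- The companion operator `I_g(f)(z) = ∫_0^z g(ξ) f'(ξ) dξ` (along the segment from 0 to z). -/
def Ig (g f : ℂ → ℂ) : ℂ → ℂ :=
  fun z => z * ∫ t in (0:ℝ)..1, g ((t : ℂ) * z) * deriv f ((t : ℂ) * z)

/-- The multiplication operator `M_g(f) = g · f`. -/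
def Mg (g f : ℂ → ℂ) : ℂ → ℂ := fun z => g z * f z

/-- `T` maps `X` into `Y`. -/
def MapsInto (T : (ℂ → ℂ) → (ℂ → ℂ)) (X Y : Set (ℂ → ℂ)) : Prop :=
  ∀ f ∈ X, T f ∈ Y

/-- The Hardy space `H^q`. -/
def Hardy (q : ℝ) : Set (ℂ → ℂ) :=
  {f | HolOn f ∧ ∃ C : ℝ, ∀ r : ℝ, 0 < r → r < 1 →
      (1 / (2 * π)) * ∫ t in (0:ℝ)..(2 * π),
        ‖f ((r : ℂ) * Complex.exp ((t : ℂ) * Complex.I))‖ ^ q ≤ C}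

/-- An inner function: bounded holomorphic with radial boundary values of modulus 1 a.e. -/
def IsInner (g : ℂ → ℂ) : Prop :=
  g ∈ Hinf ∧ ∀ᵐ t : ℝ ∂(volume.restrict (Set.Ioc (0:ℝ) (2 * π))),
    Filter.Tendsto (fun r : ℝ => ‖g ((r : ℂ) * Complex.exp ((t : ℂ) * Complex.I))‖)
      (nhdsWithin 1 (Set.Iio 1)) (nhds 1)

/-- `X` has the f-property (division by inner functions). -/
def FProperty (X : Set (ℂ → ℂ)) : Prop :=
  ∀ h ∈ X, ∀ g : ℂ → ℂ, IsInner g →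
    (fun z => h z / g z) ∈ Hardy 1 → (fun z => h z / g z) ∈ X

/-- The space of multipliers `M(X,Y)`. -/
def Mult (X Y : Set (ℂ → ℂ)) : Set (ℂ → ℂ) :=
  {g | HolOn g ∧ ∀ f ∈ X, (fun z => g z * f z) ∈ Y}

end

/-!
The monomials `e n = (n + 1) ^ ((s₂ - 1) / 2) * z ^ (n + 1)` are bounded in `Q_{s₂} ∩ H^∞`, hence
so are their `ℓ¹`-combinations. If `g f'` belongs to `L²((1 - |z|²) ^ s₁ dA)` for every `f` in
`Q_{s₂} ∩ H^∞`, the closed graph theorem on `ℓ¹` bounds the norms of `g (e n)'` in that space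
uniformly in `n`. But `|g|²` has circular means at least `C r ^ m` unless `g` vanishes identically,
so these norms grow at least like `n ^ ((s₂ - s₁) / 2)`, and `g` must vanish.

For `I_g` the integrability of `g f'` holds because `(I_g f)' = g f'`. For `M_g` one writes
`g f' = (g f)' - g' f`, where `f` is bounded and `g = M_g 1` itself belongs to `Q_{s₁}`.
-/

section ClosedGraph

variable {𝕜 α F : Type*} [NontriviallyNormedField 𝕜] [NormedAddCommGroup F] [NormedSpace 𝕜 F]
  [CompleteSpace F] {mα : MeasurableSpace α} {μ : Measure α} {p : ENNReal} [Fact (1 ≤ p)]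

theorem exists_eLpNorm_le_mul_enorm_of_isBoundedLinearMap {E : Type*} [NormedAddCommGroup E]
    [NormedSpace 𝕜 E] [CompleteSpace E] {U : E → α → F}
    (hU : ∀ᵐ z ∂μ, IsBoundedLinearMap 𝕜 fun x => U x z) (hmem : ∀ x, MemLp (U x) p μ) :
    ∃ C : NNReal, ∀ x, eLpNorm (U x) p μ ≤ C * ‖x‖ₑ := by
  let T : E →ₗ[𝕜] Lp F p μ :=
    { toFun := fun x => (hmem x).toLp (U x)
      map_add' := fun x y => by
        rw [← MemLp.toLp_add, MemLp.toLp_eq_toLp_iff]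
        filter_upwards [hU] with z hz using hz.map_add x y
      map_smul' := fun c x => by
        rw [RingHom.id_apply, ← MemLp.toLp_const_smul, MemLp.toLp_eq_toLp_iff]
        filter_upwards [hU] with z hz using hz.map_smul c x }
  have hT : Continuous T := by
    refine T.continuous_of_seq_closed_graph fun v x y hv hTv => ?_
    obtain ⟨ns, hns, hae⟩ := (tendstoInMeasure_of_tendsto_Lp hTv).exists_seq_tendsto_ae
    have hcoe : ∀ᵐ z ∂μ, ∀ n, T (v n) z = U (v n) z :=
      ae_all_iff.2 fun n => (hmem (v n)).coeFn_toLp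
    refine Lp.ext ?_
    filter_upwards [hae, hcoe, (hmem x).coeFn_toLp, hU] with z hlim hcoe hx hz
    refine (tendsto_nhds_unique (hlim.congr fun n => hcoe (ns n)) ?_).trans hx.symm
    exact (hz.continuous.tendsto x).comp (hv.comp hns.tendsto_atTop)
  refine ⟨‖(⟨T, hT⟩ : E →L[𝕜] Lp F p μ)‖₊, fun x => ?_⟩
  rw [← Lp.enorm_toLp (hmem x)]
  exact ContinuousLinearMap.le_opENorm (⟨T, hT⟩ : E →L[𝕜] Lp F p μ) x

theorem hasSum_norm_lp_one {ι : Type*} {E : ι → Type*} [∀ i, NormedAddCommGroup (E i)]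
    (x : lp E 1) : HasSum (fun i => ‖x i‖) ‖x‖ := by
  simpa using lp.hasSum_norm (by simp) x

theorem isBoundedLinearMap_tsum_lp_one {ι : Type*} {v : ι → F} {B : ℝ} (hv : ∀ i, ‖v i‖ ≤ B) :
    IsBoundedLinearMap 𝕜 fun x : lp (fun _ : ι => 𝕜) 1 => ∑' i, x i • v i := by
  have hbound : ∀ (x : lp (fun _ : ι => 𝕜) 1) i, ‖x i • v i‖ ≤ ‖x i‖ * B := fun x i => by
    rw [norm_smul]
    gcongr
    exact hv i
  have hsum : ∀ x : lp (fun _ : ι => 𝕜) 1, Summable fun i => x i • v i := fun x =>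
    .of_norm_bounded ((hasSum_norm_lp_one x).summable.mul_right B) (hbound x)
  refine IsLinearMap.with_bound ⟨fun x y => ?_, fun c x => ?_⟩ B fun x => ?_
  · simp only [lp.coeFn_add, Pi.add_apply, add_smul, (hsum x).tsum_add (hsum y)]
  · simp only [lp.coeFn_smul, Pi.smul_apply, smul_assoc, (hsum x).tsum_const_smul c]
  · rw [mul_comm]
    exact tsum_of_norm_bounded ((hasSum_norm_lp_one x).mul_right B) (hbound x)

theorem exists_forall_eLpNorm_le_of_memLp_tsum_smul [CompleteSpace 𝕜] {ι : Type*} {u : ι → α → F}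
    (hu : ∀ᵐ z ∂μ, ∃ B : ℝ, ∀ i, ‖u i z‖ ≤ B)
    (hmem : ∀ x : ι → 𝕜, Summable (fun i => ‖x i‖) → MemLp (fun z => ∑' i, x i • u i z) p μ) :
    ∃ C : NNReal, ∀ i, eLpNorm (u i) p μ ≤ C := by
  classical
  obtain ⟨C, hC⟩ := exists_eLpNorm_le_mul_enorm_of_isBoundedLinearMap (𝕜 := 𝕜) (μ := μ)
    (U := fun (x : lp (fun _ : ι => 𝕜) 1) z => ∑' i, x i • u i z)
    (hu.mono fun z hz => hz.elim fun B hB => isBoundedLinearMap_tsum_lp_one hB)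
    (fun x => hmem x (hasSum_norm_lp_one x).summable)
  refine ⟨C, fun i => ?_⟩
  have hsingle : (fun z => ∑' j, (lp.single 1 i (1 : 𝕜) : lp (fun _ : ι => 𝕜) 1) j • u j z)
      = u i := by
    funext z
    rw [tsum_eq_single i fun j hj => by simp [Pi.single_eq_of_ne hj]]
    simp
  have hnorm : ‖(lp.single 1 i (1 : 𝕜) : lp (fun _ : ι => 𝕜) 1)‖ₑ = 1 := by
    rw [← ofReal_norm, lp.norm_single one_pos, norm_one, ENNReal.ofReal_one]
  simpa only [hsingle, hnorm, mul_one] using hC (lp.single 1 i 1)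

end ClosedGraph

theorem eLpNorm_le_tsum_eLpNorm_of_hasSum {α E : Type*} {mα : MeasurableSpace α} {μ : Measure α}
    [NormedAddCommGroup E] {p : ENNReal} (hp : 1 ≤ p) {f : ℕ → α → E} {F : α → E}
    (hf : ∀ n, AEStronglyMeasurable (f n) μ) (hF : ∀ᵐ z ∂μ, HasSum (fun n => f n z) (F z)) :
    eLpNorm F p μ ≤ ∑' n, eLpNorm (f n) p μ := by
  have hpart : ∀ N, eLpNorm (∑ n ∈ Finset.range N, f n) p μ ≤ ∑' n, eLpNorm (f n) p μ := fun N =>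
    (eLpNorm_sum_le (fun n _ => hf n) hp).trans (ENNReal.sum_le_tsum _)
  refine (Lp.eLpNorm_lim_le_liminf_eLpNorm (f := fun N => ∑ n ∈ Finset.range N, f n)
    (fun N => Finset.aestronglyMeasurable_sum _ fun n _ => hf n) F ?_).trans ?_
  · filter_upwards [hF] with z hz
    simpa only [Finset.sum_apply] using hz.tendsto_sum_nat
  · exact liminf_le_of_le (by isBoundedDefault)
      fun b hb => hb.exists.elim fun N hN => hN.trans (hpart N)

section Holomorphic

variable {E : Type*} [NormedAddCommGroup E] [NormedSpace ℂ E]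

theorem norm_cauchyPowerSeries_mul_pow_le_circleAverage (f : ℂ → E) (c : ℂ) {r : ℝ} (hr : 0 < r)
    (m : ℕ) : ‖cauchyPowerSeries f c r m‖ * r ^ m ≤ circleAverage (fun z => ‖f z‖) c r := by
  have h := norm_cauchyPowerSeries_le f c r m
  rw [abs_of_pos hr, inv_pow, ← div_eq_mul_inv, le_div_iff₀ (by positivity)] at h
  rwa [circleAverage_def, smul_eq_mul]

theorem exists_mul_pow_le_circleAverage_norm [CompleteSpace E] {f : ℂ → E} {c : ℂ} {R : ℝ}
    (hf : DifferentiableOn ℂ f (ball c R)) (hne : ∃ z ∈ ball c R, f z ≠ 0) :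
    ∃ C > 0, ∃ m : ℕ, ∀ r ∈ Ioo 0 R, C * r ^ m ≤ circleAverage (fun z => ‖f z‖) c r := by
  have hseries : ∀ r ∈ Ioo 0 R, HasFPowerSeriesAt f (cauchyPowerSeries f c r) c := fun r hr =>
    ((hf.mono (closedBall_subset_ball hr.2)).hasFPowerSeriesOnBall
      (R := ⟨r, hr.1.le⟩) (by exact_mod_cast hr.1)).hasFPowerSeriesAt
  obtain ⟨z, hz, hfz⟩ := hne
  have hR : 0 < R := dist_nonneg.trans_lt hz
  obtain ⟨m, hm⟩ : ∃ m, cauchyPowerSeries f c (R / 2) m ≠ 0 := by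
    by_contra! hzero
    have hps := hseries (R / 2) ⟨half_pos hR, half_lt_self hR⟩
    rw [show cauchyPowerSeries f c (R / 2) = 0 from funext hzero] at hps
    exact hfz ((hf.analyticOnNhd isOpen_ball).eqOn_zero_of_preconnected_of_eventuallyEq_zero
      (convex_ball c R).isPreconnected (mem_ball_self hR) hps.eventually_eq_zero hz)
  refine ⟨_, norm_pos_iff.2 hm, m, fun r hr => ?_⟩
  rw [(hseries (R / 2) ⟨half_pos hR, half_lt_self hR⟩).eq_formalMultilinearSeries (hseries r hr)]
  exact norm_cauchyPowerSeries_mul_pow_le_circleAverage f c hr.1 m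

theorem integral_segment_eq_sub_of_hasDerivAt {f F : ℂ → ℂ} {s : Set ℂ} (hs : StarConvex ℝ 0 s)
    (hf : ContinuousOn f s) (hF : ∀ z ∈ s, HasDerivAt F (f z) z) {z : ℂ} (hz : z ∈ s) :
    z * ∫ t in (0 : ℝ)..1, f (t * z) = F z - F 0 := by
  have hmem : ∀ t ∈ uIcc (0 : ℝ) 1, (t : ℂ) * z ∈ s := fun t ht => by
    rw [uIcc_of_le zero_le_one] at ht
    simpa only [real_smul] using hs.smul_mem hz ht.1 ht.2
  have hderiv : ∀ t ∈ uIcc (0 : ℝ) 1, HasDerivAt (fun t : ℝ => F (t * z)) (z * f (t * z)) t := by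
    intro t ht
    have hline : HasDerivAt (fun t : ℝ => (t : ℂ) * z) z t := by
      simpa only [one_mul, ofRealCLM_apply, ofReal_one] using
        (ofRealCLM.hasDerivAt (x := t)).mul_const z
    exact (hF _ (hmem t ht)).scomp t hline
  rw [← intervalIntegral.integral_const_mul,
    intervalIntegral.integral_eq_sub_of_hasDerivAt hderiv]
  · simp only [ofReal_one, one_mul, ofReal_zero, zero_mul]
  · exact (continuousOn_const.mul (hf.comp (by fun_prop) hmem)).intervalIntegrable

theorem hasDerivAt_integral_segment {f : ℂ → ℂ} {R : ℝ} (hf : DifferentiableOn ℂ f (ball 0 R))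
    {z : ℂ} (hz : z ∈ ball 0 R) :
    HasDerivAt (fun w => w * ∫ t in (0 : ℝ)..1, f (t * w)) (f z) z := by
  obtain ⟨F, hF⟩ := hf.isExactOn_ball
  have hstar : StarConvex ℝ (0 : ℂ) (ball 0 R) :=
    (convex_ball 0 R).starConvex (mem_ball_self (dist_nonneg.trans_lt hz))
  refine ((hF z hz).sub_const (F 0)).congr_of_eventuallyEq ?_
  filter_upwards [isOpen_ball.mem_nhds hz] with w hw
  exact integral_segment_eq_sub_of_hasDerivAt hstar hf.continuousOn hF hw

theorem exists_forall_norm_deriv_le_of_forall_norm_le {ι : Type*} {f : ι → ℂ → E} {U : Set ℂ}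
    (hU : IsOpen U) (hf : ∀ i, DifferentiableOn ℂ (f i) U) {B : ℝ}
    (hB : ∀ i, ∀ z ∈ U, ‖f i z‖ ≤ B) {z : ℂ} (hz : z ∈ U) :
    ∃ C : ℝ, ∀ i, ‖deriv (f i) z‖ ≤ C := by
  obtain ⟨r, hr, hrU⟩ := nhds_basis_closedBall.mem_iff.1 (hU.mem_nhds hz)
  refine ⟨B / r, fun i => norm_deriv_le_of_forall_mem_sphere_norm_le hr ?_ fun w hw =>
    hB i w (hrU (sphere_subset_closedBall hw))⟩
  exact DifferentiableOn.diffContOnCl ((hf i).mono (closure_ball_subset_closedBall.trans hrU))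

theorem hasSum_deriv_tsum_smul [CompleteSpace E] {ι : Type*} {f : ι → ℂ → E} {U : Set ℂ}
    (hU : IsOpen U) (hf : ∀ i, DifferentiableOn ℂ (f i) U) {B : ℝ}
    (hB : ∀ i, ∀ z ∈ U, ‖f i z‖ ≤ B) {x : ι → ℂ} (hx : Summable fun i => ‖x i‖) {z : ℂ}
    (hz : z ∈ U) :
    HasSum (fun i => x i • deriv (f i) z) (deriv (fun w => ∑' i, x i • f i w) z) := by
  have h := hasSum_deriv_of_summable_norm (F := fun i w => x i • f i w) (hx.mul_right B)
    (fun i => (hf i).const_smul (x i)) hU (fun i w hw => ?_) hz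
  · simpa only [deriv_fun_const_smul (x _) ((hf _).differentiableAt (hU.mem_nhds hz))] using h
  · rw [norm_smul]
    gcongr
    exact hB i w hw

end Holomorphic

section Polar

theorem setLIntegral_Ioo_ofReal_eq_intervalIntegral {f : ℝ → ℝ} {a b : ℝ} (hab : a ≤ b)
    (hf : IntervalIntegrable f volume a b) (hf0 : ∀ t ∈ Ioo a b, 0 ≤ f t) :
    ∫⁻ t in Ioo a b, ENNReal.ofReal (f t) = ENNReal.ofReal (∫ t in a..b, f t) := by
  rw [intervalIntegral.integral_of_le hab, integral_Ioc_eq_integral_Ioo,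
    ofReal_integral_eq_lintegral_ofReal (hf.1.mono_set Ioo_subset_Ioc_self)]
  exact ae_restrict_of_forall_mem measurableSet_Ioo hf0

theorem setLIntegral_ball_eq_polar {f : ℂ → ENNReal} {R : ℝ} (hf : ContinuousOn f (ball 0 R)) :
    ∫⁻ z in ball 0 R, f z =
      ∫⁻ r in Ioo 0 R, ENNReal.ofReal r * ∫⁻ θ in Ioo (-π) π, f (circleMap 0 r θ) := by
  have hsymm : ∀ p : ℝ × ℝ, Complex.polarCoord.symm p = circleMap 0 p.1 p.2 := fun p => by
    rw [Complex.polarCoord_symm_apply, circleMap_zero, exp_mul_I, ofReal_cos, ofReal_sin]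
  have hinter : Iio R ×ˢ univ ∩ polarCoord.target = Ioo 0 R ×ˢ Ioo (-π) π := by
    rw [polarCoord_target, prod_inter_prod, univ_inter, inter_comm, Ioi_inter_Iio]
  have hind : ∀ p ∈ polarCoord.target,
      ENNReal.ofReal p.1 • (ball 0 R).indicator f (circleMap 0 p.1 p.2) =
        (Iio R ×ˢ univ).indicator (fun p => ENNReal.ofReal p.1 * f (circleMap 0 p.1 p.2)) p := by
    intro p hp
    have hp0 : 0 < p.1 := (polarCoord_target ▸ hp).1
    have hmem : circleMap 0 p.1 p.2 ∈ ball (0 : ℂ) R ↔ p ∈ Iio R ×ˢ univ := by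
      simp [abs_of_pos hp0]
    by_cases h : p ∈ Iio R ×ˢ univ
    · rw [indicator_of_mem h, indicator_of_mem (hmem.2 h), smul_eq_mul]
    · rw [indicator_of_notMem h, indicator_of_notMem (mt hmem.1 h), smul_zero]
  have hcont : ContinuousOn (fun p : ℝ × ℝ => f (circleMap 0 p.1 p.2)) (Ioo 0 R ×ˢ Ioo (-π) π) :=
    hf.comp (by unfold circleMap; fun_prop) fun p hp => by
      simpa [abs_of_pos hp.1.1] using hp.1.2
  rw [← lintegral_indicator measurableSet_ball, ← Complex.lintegral_comp_polarCoord_symm]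
  simp_rw [hsymm]
  rw [setLIntegral_congr_fun polarCoord.open_target.measurableSet hind,
    setLIntegral_indicator (measurableSet_Iio.prod .univ), hinter, Measure.volume_eq_prod,
    ← Measure.prod_restrict, lintegral_prod]
  · exact lintegral_congr fun r => lintegral_const_mul' _ _ ENNReal.ofReal_ne_top
  · rw [Measure.prod_restrict]
    exact measurable_fst.ennreal_ofReal.aemeasurable.mul
      (hcont.aemeasurable (measurableSet_Ioo.prod measurableSet_Ioo))

theorem setLIntegral_circleMap_eq_circleAverage {u : ℂ → ℝ} {c : ℂ} {r : ℝ}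
    (hu : ContinuousOn u (sphere c |r|)) (hu0 : ∀ z ∈ sphere c |r|, 0 ≤ u z) :
    ∫⁻ θ in Ioo (-π) π, ENNReal.ofReal (u (circleMap c r θ)) =
      ENNReal.ofReal (2 * π * circleAverage u c r) := by
  have hcont : Continuous fun θ => u (circleMap c r θ) :=
    hu.comp_continuous (continuous_circleMap c r) (circleMap_mem_sphere' c r)
  have hper : Function.Periodic (fun θ => u (circleMap c r θ)) (2 * π) :=
    (periodic_circleMap c r).comp u
  have hshift : ∫ θ in 0..2 * π, u (circleMap c r θ) = ∫ θ in -π..π, u (circleMap c r θ) := by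
    simpa only [zero_add, show -π + 2 * π = π by ring] using hper.intervalIntegral_add_eq 0 (-π)
  rw [circleAverage_def, smul_eq_mul, mul_inv_cancel_left₀ two_pi_pos.ne', hshift]
  exact setLIntegral_Ioo_ofReal_eq_intervalIntegral (by linarith [pi_pos])
    (hcont.intervalIntegrable _ _) fun θ _ => hu0 _ (circleMap_mem_sphere' c r θ)

theorem sqrt_mem_Ioo_zero_one {t : ℝ} (ht : t ∈ Ioo 0 1) : √t ∈ Ioo 0 1 :=
  ⟨sqrt_pos.2 ht.1, (sqrt_lt' one_pos).2 (by simpa using ht.2)⟩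

theorem lintegral_Ioo_two_mul_comp_sq (G : ℝ → ENNReal) :
    ∫⁻ r in Ioo (0 : ℝ) 1, ENNReal.ofReal (2 * r) * G r = ∫⁻ t in Ioo (0 : ℝ) 1, G √t := by
  have himage : (fun r : ℝ => r ^ 2) '' Ioo 0 1 = Ioo 0 1 := by
    ext t
    refine ⟨?_, fun ht => ⟨√t, sqrt_mem_Ioo_zero_one ht, sq_sqrt ht.1.le⟩⟩
    rintro ⟨r, hr, rfl⟩
    exact ⟨pow_pos hr.1 2, pow_lt_one₀ hr.1.le hr.2 two_ne_zero⟩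
  have hinj : InjOn (fun r : ℝ => r ^ 2) (Ioo 0 1) := fun r hr t ht h =>
    (pow_left_inj₀ hr.1.le ht.1.le two_ne_zero).1 h
  have h := lintegral_image_eq_lintegral_abs_deriv_mul measurableSet_Ioo
    (fun r _ => (hasDerivAt_pow 2 r).hasDerivWithinAt) hinj fun t => G √t
  rw [himage] at h
  rw [h]
  refine setLIntegral_congr_fun measurableSet_Ioo fun r hr => ?_
  simp [sqrt_sq hr.1.le, abs_of_pos hr.1]

theorem lintegral_dA_eq_lintegral_circleAverage_sqrt {u : ℂ → ℝ} (hu : ContinuousOn u (ball 0 1))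
    (hu0 : ∀ z ∈ ball (0 : ℂ) 1, 0 ≤ u z) :
    ∫⁻ z in ball 0 1, ENNReal.ofReal (u z) ∂dA =
      ∫⁻ t in Ioo (0 : ℝ) 1, ENNReal.ofReal (circleAverage u 0 √t) := by
  have hcircle : ∀ r ∈ Ioo (0 : ℝ) 1, (ENNReal.ofReal π)⁻¹ * (ENNReal.ofReal r *
      ∫⁻ θ in Ioo (-π) π, ENNReal.ofReal (u (circleMap 0 r θ))) =
        ENNReal.ofReal (2 * r) * ENNReal.ofReal (circleAverage u 0 r) := by
    intro r hr
    have hsub : sphere (0 : ℂ) |r| ⊆ ball 0 1 :=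
      sphere_subset_ball (abs_lt.2 ⟨by linarith [hr.1], hr.2⟩)
    rw [setLIntegral_circleMap_eq_circleAverage (hu.mono hsub) fun z hz => hu0 z (hsub hz),
      ← ENNReal.ofReal_inv_of_pos pi_pos, ← ENNReal.ofReal_mul hr.1.le,
      ← ENNReal.ofReal_mul (inv_nonneg.2 pi_nonneg), ← ENNReal.ofReal_mul (by linarith [hr.1])]
    congr 1
    field_simp [pi_ne_zero]
  rw [dA, Measure.restrict_smul, lintegral_smul_measure, smul_eq_mul,
    setLIntegral_ball_eq_polar (f := fun z => ENNReal.ofReal (u z))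
      (ENNReal.continuous_ofReal.comp_continuousOn hu),
    ← lintegral_const_mul' _ _ (by simp [pi_pos]),
    setLIntegral_congr_fun measurableSet_Ioo hcircle]
  exact lintegral_Ioo_two_mul_comp_sq fun r => ENNReal.ofReal (circleAverage u 0 r)

theorem circleAverage_radial_mul (ρ : ℝ → ℝ) (u : ℂ → ℝ) {t : ℝ} (ht : 0 ≤ t) :
    circleAverage (fun z => ρ (‖z‖ ^ 2) * u z) 0 √t = ρ t * circleAverage u 0 √t := by
  rw [← smul_eq_mul, ← circleAverage_fun_smul]
  refine circleAverage_congr_sphere fun z hz => ?_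
  have hz : ‖z‖ = √t := by simpa [abs_of_nonneg (sqrt_nonneg t)] using hz
  simp only [hz, sq_sqrt ht, smul_eq_mul]

theorem lintegral_dA_radial_mul {ρ : ℝ → ℝ} {u : ℂ → ℝ} (hρ : ContinuousOn ρ (Ico 0 1))
    (hρ0 : ∀ t ∈ Ico (0 : ℝ) 1, 0 ≤ ρ t) (hu : ContinuousOn u (ball 0 1))
    (hu0 : ∀ z ∈ ball (0 : ℂ) 1, 0 ≤ u z) :
    ∫⁻ z in ball 0 1, ENNReal.ofReal (ρ (‖z‖ ^ 2) * u z) ∂dA =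
      ∫⁻ t in Ioo (0 : ℝ) 1, ENNReal.ofReal (ρ t * circleAverage u 0 √t) := by
  have hsq : ∀ z ∈ ball (0 : ℂ) 1, ‖z‖ ^ 2 ∈ Ico (0 : ℝ) 1 := fun z hz =>
    ⟨by positivity, pow_lt_one₀ (norm_nonneg z) (mem_ball_zero_iff.1 hz) two_ne_zero⟩
  rw [lintegral_dA_eq_lintegral_circleAverage_sqrt (u := fun z => ρ (‖z‖ ^ 2) * u z)
    ((hρ.comp (by fun_prop) hsq).mul hu) fun z hz => mul_nonneg (hρ0 _ (hsq z hz)) (hu0 z hz)]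
  refine setLIntegral_congr_fun measurableSet_Ioo fun t ht => ?_
  simp only [circleAverage_radial_mul ρ u ht.1.le]

end Polar

section Moments

theorem integral_pow_mul_one_sub (n : ℕ) :
    ∫ t in (0 : ℝ)..1, t ^ n * (1 - t) = ((n : ℝ) + 1)⁻¹ * ((n : ℝ) + 2)⁻¹ := by
  have hsplit : ∀ t : ℝ, t ^ n * (1 - t) = t ^ n - t ^ (n + 1) := fun t => by ring
  simp_rw [hsplit]
  rw [intervalIntegral.integral_sub (by simp) (by simp), integral_pow, integral_pow]
  simp only [one_pow, ne_eq, Nat.add_eq_zero_iff, one_ne_zero, and_false, not_false_eq_true,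
    zero_pow, sub_zero, one_div]
  push_cast
  field_simp
  ring

theorem lintegral_pow_mul_le_two (n : ℕ) :
    ∫⁻ t in Ioo (0 : ℝ) 1, ENNReal.ofReal ((n + 1) * t ^ n * (1 + (n + 1) * (1 - t))) ≤ 2 := by
  have hsplit : ∀ t : ℝ, (n + 1) * t ^ n * (1 + (n + 1) * (1 - t)) =
      (n + 1) * t ^ n + (n + 1) ^ 2 * (t ^ n * (1 - t)) := fun t => by ring
  rw [setLIntegral_Ioo_ofReal_eq_intervalIntegral zero_le_one
    (Continuous.intervalIntegrable (by fun_prop) 0 1) fun t ht => ?_]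
  · rw [← ENNReal.ofReal_ofNat]
    refine ENNReal.ofReal_le_ofReal ?_
    simp_rw [hsplit]
    rw [intervalIntegral.integral_add (Continuous.intervalIntegrable (by fun_prop) 0 1)
      (Continuous.intervalIntegrable (by fun_prop) 0 1), intervalIntegral.integral_const_mul,
      intervalIntegral.integral_const_mul, integral_pow_mul_one_sub, integral_pow]
    have hn : ((n : ℝ) + 1) * ((n : ℝ) + 2)⁻¹ ≤ 1 := by
      rw [← div_eq_mul_inv]
      exact div_le_one_of_le₀ (by linarith) (by positivity)
    simp only [one_pow, ne_eq, Nat.add_eq_zero_iff, one_ne_zero, and_false, not_false_eq_true,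
      zero_pow, sub_zero]
    field_simp at hn ⊢
    linarith
  · have := sub_nonneg.2 ht.2.le
    have := ht.1.le
    positivity

theorem inv_two_le_pow_of_one_sub_le {n : ℕ} {t : ℝ} (ht : 1 - (2 * ((n : ℝ) + 1))⁻¹ ≤ t) :
    2⁻¹ ≤ t ^ n := by
  set δ : ℝ := (2 * ((n : ℝ) + 1))⁻¹ with hδ
  have hδ1 : δ ≤ 2⁻¹ := inv_anti₀ two_pos (by linarith [n.cast_nonneg (α := ℝ)])
  have hnδ : n * δ ≤ 2⁻¹ := by
    rw [hδ, mul_inv, mul_left_comm, ← div_eq_mul_inv]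
    exact mul_le_of_le_one_right (by norm_num) (div_le_one_of_le₀ (by linarith) (by positivity))
  calc 2⁻¹ ≤ 1 + n * (-δ) := by linarith
    _ ≤ (1 + -δ) ^ n := one_add_mul_le_pow (by linarith) n
    _ ≤ t ^ n := by
      gcongr <;> linarith

theorem lintegral_one_sub_rpow {s δ : ℝ} (hs : -1 < s) (hδ : 0 ≤ δ) :
    ∫⁻ t in Ioo (1 - δ) 1, ENNReal.ofReal ((1 - t) ^ s) =
      ENNReal.ofReal (δ ^ (1 + s) / (1 + s)) := by
  have hintegrable : IntervalIntegrable (fun t : ℝ => (1 - t) ^ s) volume (1 - δ) 1 := by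
    simpa only [sub_zero] using
      (intervalIntegral.intervalIntegrable_rpow' (a := δ) (b := 0) hs).comp_sub_left 1
  rw [setLIntegral_Ioo_ofReal_eq_intervalIntegral (by linarith) hintegrable fun t ht =>
      rpow_nonneg (sub_nonneg.2 ht.2.le) s,
    intervalIntegral.integral_comp_sub_left (fun t : ℝ => t ^ s) 1, integral_rpow (.inl hs),
    sub_self, sub_sub_cancel, add_comm s, zero_rpow (by linarith), sub_zero]

theorem exists_mul_rpow_le_lintegral_pow_mul_one_sub_rpow {s : ℝ} (hs : -1 < s) :
    ∃ c > 0, ∀ n : ℕ, ENNReal.ofReal (c * ((n : ℝ) + 1) ^ (-(1 + s))) ≤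
      ∫⁻ t in Ioo (0 : ℝ) 1, ENNReal.ofReal (t ^ n * (1 - t) ^ s) := by
  have hs' : 0 < 1 + s := by linarith
  refine ⟨2⁻¹ * (2 ^ (-(1 + s)) / (1 + s)), by positivity, fun n => ?_⟩
  have hδ : (2 * ((n : ℝ) + 1))⁻¹ ≤ 1 :=
    inv_le_one_of_one_le₀ (by linarith [n.cast_nonneg (α := ℝ)])
  have hconst : 2⁻¹ * (2 ^ (-(1 + s)) / (1 + s)) * ((n : ℝ) + 1) ^ (-(1 + s)) =
      2⁻¹ * ((2 * ((n : ℝ) + 1))⁻¹ ^ (1 + s) / (1 + s)) := by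
    rw [inv_rpow (by positivity), ← rpow_neg (by positivity),
      mul_rpow zero_le_two (by positivity)]
    ring
  calc ENNReal.ofReal (2⁻¹ * (2 ^ (-(1 + s)) / (1 + s)) * ((n : ℝ) + 1) ^ (-(1 + s)))
      = ENNReal.ofReal 2⁻¹ * ∫⁻ t in Ioo (1 - (2 * ((n : ℝ) + 1))⁻¹) 1,
          ENNReal.ofReal ((1 - t) ^ s) := by
        rw [lintegral_one_sub_rpow hs (by positivity), ← ENNReal.ofReal_mul (by norm_num), hconst]
    _ = ∫⁻ t in Ioo (1 - (2 * ((n : ℝ) + 1))⁻¹) 1, ENNReal.ofReal (2⁻¹ * (1 - t) ^ s) := by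
        simp_rw [ENNReal.ofReal_mul (show (0 : ℝ) ≤ 2⁻¹ by norm_num)]
        exact (lintegral_const_mul' _ _ ENNReal.ofReal_ne_top).symm
    _ ≤ ∫⁻ t in Ioo (1 - (2 * ((n : ℝ) + 1))⁻¹) 1, ENNReal.ofReal (t ^ n * (1 - t) ^ s) :=
        setLIntegral_mono' measurableSet_Ioo fun t ht => ENNReal.ofReal_le_ofReal <|
          mul_le_mul_of_nonneg_right (inv_two_le_pow_of_one_sub_le ht.1.le)
            (rpow_nonneg (sub_nonneg.2 ht.2.le) s)
    _ ≤ _ := lintegral_mono_set (Ioo_subset_Ioo_left (by linarith))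

end Moments

section Moebius

theorem one_sub_conj_mul_ne_zero {a z : ℂ} (h : ‖a‖ * ‖z‖ < 1) :
    1 - (starRingEnd ℂ) a * z ≠ 0 := fun h0 => by
  have := congrArg norm (sub_eq_zero.1 h0)
  rw [norm_mul, RCLike.norm_conj, norm_one] at this
  linarith

theorem one_sub_norm_phi_sq {a z : ℂ} (h : ‖a‖ * ‖z‖ < 1) :
    1 - ‖phi a z‖ ^ 2 =
      (1 - ‖a‖ ^ 2) * (1 - ‖z‖ ^ 2) / ‖1 - (starRingEnd ℂ) a * z‖ ^ 2 := by
  have hne := norm_ne_zero_iff.2 (one_sub_conj_mul_ne_zero h)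
  rw [phi, norm_div, div_pow, eq_div_iff (pow_ne_zero 2 hne), sub_mul,
    div_mul_cancel₀ _ (pow_ne_zero 2 hne), one_mul]
  simp only [← normSq_eq_norm_sq, normSq_apply, sub_re, sub_im, mul_re, mul_im, conj_re, conj_im,
    one_re, one_im]
  ring

theorem one_sub_norm_phi_sq_mem_Ioc {a z : ℂ} (ha : a ∈ ball 0 1) (hz : z ∈ ball 0 1) :
    1 - ‖phi a z‖ ^ 2 ∈ Ioc (0 : ℝ) 1 := by
  rw [mem_ball_zero_iff] at ha hz
  have haz : ‖a‖ * ‖z‖ < 1 := mul_lt_one_of_nonneg_of_lt_one_left (norm_nonneg a) ha hz.le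
  refine ⟨?_, sub_le_self _ (sq_nonneg _)⟩
  have h1 := norm_pos_iff.2 (one_sub_conj_mul_ne_zero haz)
  have h2 := sub_pos.2 (pow_lt_one₀ (norm_nonneg a) ha two_ne_zero)
  have h3 := sub_pos.2 (pow_lt_one₀ (norm_nonneg z) hz two_ne_zero)
  rw [one_sub_norm_phi_sq haz]
  positivity

theorem circleAverage_inv_norm_one_sub_conj_mul_sq {a : ℂ} {r : ℝ} (hr : 0 < r)
    (har : ‖a‖ * r < 1) :
    circleAverage (fun z => (‖1 - (starRingEnd ℂ) a * z‖ ^ 2)⁻¹) 0 r =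
      (1 - (‖a‖ * r) ^ 2)⁻¹ := by
  have hw : (r : ℂ) ^ 2 * a ∈ ball (0 : ℂ) r := by
    rw [mem_ball_zero_iff, norm_mul, norm_pow, norm_real, norm_of_nonneg hr.le]
    nlinarith
  have hkernel : EqOn (poissonKernel 0 ((r : ℂ) ^ 2 * a) • fun _ => (1 : ℝ))
      (fun z => (1 - (‖a‖ * r) ^ 2) • (‖1 - (starRingEnd ℂ) a * z‖ ^ 2)⁻¹) (sphere 0 |r|) := by
    intro z hz
    have hz : ‖z‖ = r := by simpa [abs_of_pos hr] using hz
    have hfactor : z - (r : ℂ) ^ 2 * a = z * (starRingEnd ℂ) (1 - (starRingEnd ℂ) a * z) := by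
      rw [← hz, ← mul_conj' z, map_sub, map_one, map_mul, conj_conj]
      ring
    simp only [Pi.smul_apply', smul_eq_mul, mul_one, poissonKernel_def, sub_zero, hfactor,
      norm_mul, norm_pow, RCLike.norm_conj, norm_real, norm_of_nonneg hr.le, hz]
    field_simp
  have hpoisson :=
    (InnerProductSpace.harmonicOnNhd_const (1 : ℝ)).circleAverage_poissonKernel_smul hw
  rw [circleAverage_congr_sphere hkernel, circleAverage_fun_smul] at hpoisson
  exact eq_inv_of_mul_eq_one_right hpoisson

theorem continuousOn_phi {a : ℂ} (ha : a ∈ ball 0 1) : ContinuousOn (phi a) (ball 0 1) := by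
  rw [mem_ball_zero_iff] at ha
  refine ContinuousOn.div (by fun_prop) (by fun_prop) fun z hz => one_sub_conj_mul_ne_zero ?_
  exact mul_lt_one_of_nonneg_of_lt_one_left (norm_nonneg a) ha (mem_ball_zero_iff.1 hz).le

theorem circleAverage_one_sub_norm_phi_sq_le {a : ℂ} (ha : a ∈ ball 0 1) {r : ℝ}
    (hr : r ∈ Ioo 0 1) : circleAverage (fun z => 1 - ‖phi a z‖ ^ 2) 0 r ≤ 1 - r ^ 2 := by
  rw [mem_ball_zero_iff] at ha
  have har : ‖a‖ * r < 1 := mul_lt_one_of_nonneg_of_lt_one_left (norm_nonneg a) ha hr.2.le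
  have hcircle : EqOn (fun z => 1 - ‖phi a z‖ ^ 2)
      (fun z => ((1 - ‖a‖ ^ 2) * (1 - r ^ 2)) • (‖1 - (starRingEnd ℂ) a * z‖ ^ 2)⁻¹)
      (sphere 0 |r|) := by
    intro z hz
    have hz : ‖z‖ = r := by simpa [abs_of_pos hr.1] using hz
    dsimp only
    rw [one_sub_norm_phi_sq (by rwa [hz]), hz, smul_eq_mul, div_eq_mul_inv]
  have hr2 : r ^ 2 ≤ 1 := pow_le_one₀ hr.1.le hr.2.le
  have har2 : (‖a‖ * r) ^ 2 < 1 := pow_lt_one₀ (by have := hr.1; positivity) har two_ne_zero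
  rw [circleAverage_congr_sphere hcircle, circleAverage_fun_smul,
    circleAverage_inv_norm_one_sub_conj_mul_sq hr.1 har, smul_eq_mul, ← div_eq_mul_inv,
    div_le_iff₀ (sub_pos.2 har2), mul_comm]
  refine mul_le_mul_of_nonneg_left (sub_le_sub_left ?_ 1) (sub_nonneg.2 hr2)
  rw [mul_pow]
  exact mul_le_of_le_one_right (sq_nonneg _) hr2

end Moebius

section QSpace

/-- The measure `(1 - |φ_a|²)^s dA` on the unit disc: the seminorm of `f` in `Q_s` is the supremum
over `a` of the norm of `f'` in `L²` of this measure. -/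
noncomputable def moebiusMeasure (s : ℝ) (a : ℂ) : Measure ℂ :=
  (dA.restrict (ball 0 1)).withDensity fun z => ENNReal.ofReal ((1 - ‖phi a z‖ ^ 2) ^ s)

variable {s s' : ℝ} {a : ℂ} {f g u : ℂ → ℂ}

theorem moebiusMeasure_absolutelyContinuous : moebiusMeasure s a ≪ dA.restrict (ball 0 1) :=
  withDensity_absolutelyContinuous _ _

theorem ae_moebiusMeasure_of_forall_mem_ball {P : ℂ → Prop} (hP : ∀ z ∈ ball (0 : ℂ) 1, P z) :
    ∀ᵐ z ∂moebiusMeasure s a, P z :=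
  moebiusMeasure_absolutelyContinuous.ae_le (ae_restrict_of_forall_mem measurableSet_ball hP)

theorem aestronglyMeasurable_moebiusMeasure (hu : ContinuousOn u (ball 0 1)) :
    AEStronglyMeasurable u (moebiusMeasure s a) :=
  (hu.aestronglyMeasurable measurableSet_ball).mono_ac moebiusMeasure_absolutelyContinuous

theorem eLpNorm_two_moebiusMeasure_sq :
    eLpNorm u 2 (moebiusMeasure s a) ^ 2 =
      ∫⁻ z in ball 0 1, ENNReal.ofReal (‖u z‖ ^ 2 * (1 - ‖phi a z‖ ^ 2) ^ s) ∂dA := by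
  have hsq : eLpNorm u 2 (moebiusMeasure s a) ^ 2 = ∫⁻ z, ‖u z‖ₑ ^ 2 ∂moebiusMeasure s a := by
    simpa using eLpNorm_nnreal_pow_eq_lintegral (f := u) (μ := moebiusMeasure s a)
      (two_ne_zero' NNReal)
  have hmeas : Measurable fun z => ENNReal.ofReal ((1 - ‖phi a z‖ ^ 2) ^ s) := by
    unfold phi
    fun_prop
  rw [hsq, moebiusMeasure, lintegral_withDensity_eq_lintegral_mul_non_measurable _ hmeas (by simp)]
  refine lintegral_congr fun z => ?_
  rw [Pi.mul_apply, mul_comm, ENNReal.ofReal_mul (by positivity),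
    ENNReal.ofReal_pow (norm_nonneg _), ofReal_norm]

theorem mem_Qs_iff :
    f ∈ Qs s ↔ HolOn f ∧
      ∃ C : NNReal, ∀ a ∈ ball (0 : ℂ) 1, eLpNorm (deriv f) 2 (moebiusMeasure s a) ≤ C := by
  simp only [Qs, mem_ofPred_eq, ← eLpNorm_two_moebiusMeasure_sq]
  refine and_congr_right fun _ => ⟨fun h => ?_, fun ⟨C, hC⟩ => ?_⟩
  · refine ⟨((⨆ a ∈ ball (0 : ℂ) 1, eLpNorm (deriv f) 2 (moebiusMeasure s a) ^ 2) ^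
      (2⁻¹ : ℝ)).toNNReal, fun a ha => ?_⟩
    rw [ENNReal.coe_toNNReal (ENNReal.rpow_ne_top_of_nonneg (by norm_num) h.ne),
      ENNReal.le_rpow_inv_iff two_pos, ENNReal.rpow_two]
    exact le_iSup₂_of_le a ha le_rfl
  · refine (iSup₂_le fun a ha => pow_le_pow_left₀ zero_le (hC a ha) 2).trans_lt ?_
    exact ENNReal.pow_lt_top ENNReal.coe_lt_top

theorem continuousOn_deriv_of_holOn (hf : HolOn f) : ContinuousOn (deriv f) (ball 0 1) :=
  (DifferentiableOn.deriv hf isOpen_ball).continuousOn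

theorem memLp_deriv_of_mem_Qs (hf : f ∈ Qs s) (ha : a ∈ ball (0 : ℂ) 1) :
    MemLp (deriv f) 2 (moebiusMeasure s a) := by
  obtain ⟨-, C, hC⟩ := mem_Qs_iff.1 hf
  exact ⟨(measurable_deriv f).aestronglyMeasurable, (hC a ha).trans_lt ENNReal.coe_lt_top⟩

theorem moebiusMeasure_anti (hs : s ≤ s') (ha : a ∈ ball (0 : ℂ) 1) :
    moebiusMeasure s' a ≤ moebiusMeasure s a := by
  refine withDensity_mono (ae_restrict_of_forall_mem measurableSet_ball fun z hz => ?_)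
  obtain ⟨h0, h1⟩ := one_sub_norm_phi_sq_mem_Ioc ha hz
  exact ENNReal.ofReal_le_ofReal (rpow_le_rpow_of_exponent_ge h0 h1 hs)

theorem Qs_mono (hs : s ≤ s') : Qs s ⊆ Qs s' := fun f hf => by
  obtain ⟨hol, C, hC⟩ := mem_Qs_iff.1 hf
  exact mem_Qs_iff.2 ⟨hol, C, fun a ha =>
    (eLpNorm_mono_measure _ (moebiusMeasure_anti hs ha)).trans (hC a ha)⟩

theorem mem_Qs_of_eqOn_const {c : ℂ} (hf : EqOn f (fun _ => c) (ball 0 1)) : f ∈ Qs s := by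
  refine mem_Qs_iff.2 ⟨(differentiableOn_const c).congr hf, 0, fun a _ => ?_⟩
  have hderiv : ∀ z ∈ ball (0 : ℂ) 1, deriv f z = 0 := fun z hz => by
    rw [(hf.eventuallyEq_of_mem (isOpen_ball.mem_nhds hz)).deriv_eq, deriv_const]
  rw [eLpNorm_congr_ae (ae_moebiusMeasure_of_forall_mem_ball hderiv)]
  simp

theorem tsum_mul_mem_Qs_inter_Hinf {φ : ℕ → ℂ → ℂ} (hφ : ∀ n, HolOn (φ n)) {B : ℝ}
    (hB : ∀ n, ∀ z ∈ ball (0 : ℂ) 1, ‖φ n z‖ ≤ B) {C : NNReal}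
    (hC : ∀ n, ∀ a ∈ ball (0 : ℂ) 1, eLpNorm (deriv (φ n)) 2 (moebiusMeasure s a) ≤ C)
    {x : ℕ → ℂ} (hx : Summable fun n => ‖x n‖) :
    (fun z => ∑' n, x n • φ n z) ∈ Qs s ∩ Hinf := by
  have hbound : ∀ n, ∀ z ∈ ball (0 : ℂ) 1, ‖x n • φ n z‖ ≤ ‖x n‖ * B := fun n z hz => by
    rw [norm_smul]
    gcongr
    exact hB n z hz
  have hol : HolOn fun z => ∑' n, x n • φ n z := differentiableOn_tsum_of_summable_norm
    (hx.mul_right B) (fun n => (hφ n).const_smul (x n)) isOpen_ball hbound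
  have hnorm : Summable fun n => ‖x n‖₊ := NNReal.summable_coe.1 hx
  refine ⟨mem_Qs_iff.2 ⟨hol, (∑' n, ‖x n‖₊) * C, fun a ha => ?_⟩, hol, _, fun z hz =>
    tsum_of_norm_bounded (hx.mul_right B).hasSum fun n => hbound n z hz⟩
  calc eLpNorm (deriv fun z => ∑' n, x n • φ n z) 2 (moebiusMeasure s a)
      ≤ ∑' n, eLpNorm (x n • deriv (φ n)) 2 (moebiusMeasure s a) :=
        eLpNorm_le_tsum_eLpNorm_of_hasSum one_le_two
          (fun n => ((measurable_deriv (φ n)).const_smul (x n)).aestronglyMeasurable)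
          (ae_moebiusMeasure_of_forall_mem_ball fun z hz =>
            hasSum_deriv_tsum_smul isOpen_ball hφ hB hx hz)
    _ ≤ ∑' n, (‖x n‖₊ : ENNReal) * C := ENNReal.tsum_le_tsum fun n => by
        rw [eLpNorm_const_smul, enorm_eq_nnnorm]
        gcongr
        exact hC n a ha
    _ = ((∑' n, ‖x n‖₊) * C : NNReal) := by
        rw [ENNReal.tsum_mul_right, ENNReal.coe_mul, ENNReal.coe_tsum hnorm]

theorem exists_forall_eLpNorm_mul_deriv_le {s₁ s₂ : ℝ}
    (H : ∀ f ∈ Qs s₂ ∩ Hinf, MemLp (fun z => g z * deriv f z) 2 (moebiusMeasure s₁ a))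
    {φ : ℕ → ℂ → ℂ} (hφ : ∀ n, HolOn (φ n)) {B : ℝ}
    (hB : ∀ n, ∀ z ∈ ball (0 : ℂ) 1, ‖φ n z‖ ≤ B) {C : NNReal}
    (hC : ∀ n, ∀ a ∈ ball (0 : ℂ) 1, eLpNorm (deriv (φ n)) 2 (moebiusMeasure s₂ a) ≤ C) :
    ∃ K : NNReal, ∀ n, eLpNorm (fun z => g z * deriv (φ n) z) 2 (moebiusMeasure s₁ a) ≤ K := by
  refine exists_forall_eLpNorm_le_of_memLp_tsum_smul (𝕜 := ℂ)
    (ae_moebiusMeasure_of_forall_mem_ball fun z hz => ?_) fun x hx => ?_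
  · obtain ⟨D, hD⟩ := exists_forall_norm_deriv_le_of_forall_norm_le isOpen_ball hφ hB hz
    refine ⟨‖g z‖ * D, fun n => ?_⟩
    rw [norm_mul]
    gcongr
    exact hD n
  · refine (H _ (tsum_mul_mem_Qs_inter_Hinf hφ hB hC hx)).ae_eq
      (ae_moebiusMeasure_of_forall_mem_ball fun z hz => ?_)
    simpa only [smul_eq_mul, mul_left_comm] using
      ((hasSum_deriv_tsum_smul isOpen_ball hφ hB hx hz).mul_left (g z)).tsum_eq.symm

end QSpace

section WeightedMonomials

/-- The monomial `(n + 1)^((s - 1) / 2) z^(n + 1)`, normalized so that, for `0 ≤ s ≤ 1`,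
the family is bounded both in `Q_s` and in `H^∞`. -/
noncomputable def weightedMonomial (s : ℝ) (n : ℕ) (z : ℂ) : ℂ :=
  (((n : ℝ) + 1) ^ ((s - 1) / 2) : ℝ) * z ^ (n + 1)

theorem holOn_weightedMonomial (s : ℝ) (n : ℕ) : HolOn (weightedMonomial s n) := by
  unfold HolOn weightedMonomial
  fun_prop

theorem norm_weightedMonomial_le_one {s : ℝ} (hs : s ≤ 1) (n : ℕ) {z : ℂ}
    (hz : z ∈ ball (0 : ℂ) 1) : ‖weightedMonomial s n z‖ ≤ 1 := by
  rw [weightedMonomial, norm_mul, norm_pow, norm_real, norm_of_nonneg (by positivity)]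
  exact mul_le_one₀ (rpow_le_one_of_one_le_of_nonpos (by simp) (by linarith)) (by positivity)
    (pow_le_one₀ (norm_nonneg z) (mem_ball_zero_iff.1 hz).le)

theorem norm_deriv_weightedMonomial_sq (s : ℝ) (n : ℕ) (z : ℂ) :
    ‖deriv (weightedMonomial s n) z‖ ^ 2 = ((n : ℝ) + 1) ^ (1 + s) * (‖z‖ ^ 2) ^ n := by
  have hderiv : deriv (weightedMonomial s n) z =
      (((n : ℝ) + 1) ^ ((s - 1) / 2) : ℝ) * (((n : ℝ) + 1 : ℝ) * z ^ n) := by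
    unfold weightedMonomial
    rw [deriv_const_mul _ (differentiableAt_pow (n + 1)), deriv_pow_field]
    simp
  have hpow : (((n : ℝ) + 1) ^ ((s - 1) / 2)) ^ 2 * ((n : ℝ) + 1) ^ 2 =
      ((n : ℝ) + 1) ^ (1 + s) := by
    rw [← rpow_natCast (_ ^ _), ← rpow_natCast (_ + _), ← rpow_mul (by positivity),
      ← rpow_add (by positivity)]
    congr 1
    push_cast
    ring
  rw [hderiv, norm_mul, norm_mul, norm_real, norm_real, norm_of_nonneg (by positivity),
    norm_of_nonneg (by positivity), norm_pow, ← hpow]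
  ring

theorem rpow_le_one_add {s x : ℝ} (hs0 : 0 ≤ s) (hs1 : s ≤ 1) (hx : 0 ≤ x) : x ^ s ≤ 1 + x :=
  (rpow_le_rpow hx (by linarith) hs0).trans (rpow_le_self_of_one_le (by linarith) hs1)

theorem circleAverage_one_add_mul_one_sub_norm_phi_sq_le {a : ℂ} (ha : a ∈ ball 0 1) {c t : ℝ}
    (hc : 0 ≤ c) (ht : t ∈ Ioo 0 1) :
    circleAverage (fun z => 1 + c * (1 - ‖phi a z‖ ^ 2)) 0 √t ≤ 1 + c * (1 - t) := by
  have hr := sqrt_mem_Ioo_zero_one ht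
  have hint : CircleIntegrable (fun z => c * (1 - ‖phi a z‖ ^ 2)) 0 √t := by
    refine ContinuousOn.circleIntegrable hr.1.le ?_
    have := (continuousOn_phi ha).mono (sphere_subset_ball hr.2)
    fun_prop
  have havg := circleAverage_one_sub_norm_phi_sq_le ha hr
  rw [sq_sqrt ht.1.le] at havg
  simp_rw [← smul_eq_mul] at hint ⊢
  rw [circleAverage_fun_add (circleIntegrable_const 1 0 √t) hint, circleAverage_const,
    circleAverage_fun_smul]
  gcongr

theorem norm_deriv_weightedMonomial_sq_mul_rpow_le {s : ℝ} (hs0 : 0 ≤ s) (hs1 : s ≤ 1) (n : ℕ)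
    (z : ℂ) {w : ℝ} (hw : 0 ≤ w) :
    ‖deriv (weightedMonomial s n) z‖ ^ 2 * w ^ s ≤
      ((n : ℝ) + 1) * (‖z‖ ^ 2) ^ n * (1 + ((n : ℝ) + 1) * w) := by
  have hN : 0 < (n : ℝ) + 1 := by positivity
  calc ‖deriv (weightedMonomial s n) z‖ ^ 2 * w ^ s
      = ((n : ℝ) + 1) * (‖z‖ ^ 2) ^ n * (((n : ℝ) + 1) * w) ^ s := by
        rw [norm_deriv_weightedMonomial_sq, mul_rpow hN.le hw, rpow_add hN, rpow_one]
        ring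
    _ ≤ _ := by
        gcongr
        exact rpow_le_one_add hs0 hs1 (by positivity)

theorem eLpNorm_deriv_weightedMonomial_le_two {s : ℝ} (hs0 : 0 ≤ s) (hs1 : s ≤ 1) (n : ℕ) {a : ℂ}
    (ha : a ∈ ball 0 1) : eLpNorm (deriv (weightedMonomial s n)) 2 (moebiusMeasure s a) ≤ 2 := by
  suffices h : eLpNorm (deriv (weightedMonomial s n)) 2 (moebiusMeasure s a) ^ 2 ≤ 2 from
    (ENNReal.pow_le_pow_left_iff two_ne_zero).1 (h.trans (le_self_pow₀ one_le_two two_ne_zero))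
  have hphi := continuousOn_phi ha
  have hw : ∀ z ∈ ball (0 : ℂ) 1, 0 ≤ 1 - ‖phi a z‖ ^ 2 :=
    fun z hz => (one_sub_norm_phi_sq_mem_Ioc ha hz).1.le
  rw [eLpNorm_two_moebiusMeasure_sq]
  calc ∫⁻ z in ball 0 1,
        ENNReal.ofReal (‖deriv (weightedMonomial s n) z‖ ^ 2 * (1 - ‖phi a z‖ ^ 2) ^ s) ∂dA
      ≤ ∫⁻ z in ball 0 1, ENNReal.ofReal
          ((n + 1) * (‖z‖ ^ 2) ^ n * (1 + (n + 1) * (1 - ‖phi a z‖ ^ 2))) ∂dA :=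
        setLIntegral_mono' measurableSet_ball fun z hz => ENNReal.ofReal_le_ofReal
          (norm_deriv_weightedMonomial_sq_mul_rpow_le hs0 hs1 n z (hw z hz))
    _ = ∫⁻ t in Ioo (0 : ℝ) 1, ENNReal.ofReal
          ((n + 1) * t ^ n * circleAverage (fun z => 1 + (n + 1) * (1 - ‖phi a z‖ ^ 2)) 0 √t) :=
        lintegral_dA_radial_mul (ρ := fun t => (n + 1) * t ^ n) (by fun_prop)
          (fun t ht => mul_nonneg (by positivity) (pow_nonneg ht.1 n)) (by fun_prop) fun z hz => by
            have := hw z hz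
            positivity
    _ ≤ ∫⁻ t in Ioo (0 : ℝ) 1, ENNReal.ofReal ((n + 1) * t ^ n * (1 + (n + 1) * (1 - t))) := by
        refine setLIntegral_mono' measurableSet_Ioo fun t ht => ENNReal.ofReal_le_ofReal ?_
        have ht0 := ht.1.le
        gcongr
        exact circleAverage_one_add_mul_one_sub_norm_phi_sq_le ha (by positivity) ht
    _ ≤ 2 := lintegral_pow_mul_le_two n

end WeightedMonomials

section LowerBound

variable {g : ℂ → ℂ}

theorem exists_mul_pow_le_circleAverage_norm_sq_sqrt (hg : HolOn g)
    (hne : ∃ z ∈ ball (0 : ℂ) 1, g z ≠ 0) :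
    ∃ C > 0, ∃ m : ℕ, ∀ t ∈ Ioo (0 : ℝ) 1,
      C * t ^ m ≤ circleAverage (fun z => ‖g z‖ ^ 2) 0 √t := by
  have hne_sq : ∃ z ∈ ball (0 : ℂ) 1, (g ^ 2) z ≠ 0 :=
    hne.imp fun z hz => ⟨hz.1, pow_ne_zero 2 hz.2⟩
  obtain ⟨C, hC, m, hCm⟩ := exists_mul_pow_le_circleAverage_norm (DifferentiableOn.pow hg 2) hne_sq
  refine ⟨C, hC, m, fun t ht => ?_⟩
  have ht0 := ht.1.le
  have hr := sqrt_mem_Ioo_zero_one ht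
  have hle : t ≤ √t := le_sqrt_of_sq_le (pow_le_of_le_one ht0 ht.2.le two_ne_zero)
  calc C * t ^ m ≤ C * √t ^ m := by gcongr
    _ ≤ _ := by simpa only [Pi.pow_apply, norm_pow] using hCm √t hr

theorem exists_mul_rpow_le_lintegral_pow_mul_norm_sq {s : ℝ} (hs : -1 < s) (hg : HolOn g)
    (hne : ∃ z ∈ ball (0 : ℂ) 1, g z ≠ 0) :
    ∃ c > 0, ∀ n : ℕ, ENNReal.ofReal (c * ((n : ℝ) + 1) ^ (-(1 + s))) ≤
      ∫⁻ z in ball 0 1,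
        ENNReal.ofReal ((‖z‖ ^ 2) ^ n * (1 - ‖z‖ ^ 2) ^ s * ‖g z‖ ^ 2) ∂dA := by
  obtain ⟨C, hC, m, hCm⟩ := exists_mul_pow_le_circleAverage_norm_sq_sqrt hg hne
  obtain ⟨c, hc, hcn⟩ := exists_mul_rpow_le_lintegral_pow_mul_one_sub_rpow hs
  refine ⟨C * c * ((m : ℝ) + 1) ^ (-(1 + s)), by positivity, fun n => ?_⟩
  have hpow : (((m : ℝ) + 1) * ((n : ℝ) + 1)) ^ (-(1 + s)) ≤
      (((n + m : ℕ) : ℝ) + 1) ^ (-(1 + s)) := by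
    refine rpow_le_rpow_of_nonpos (by positivity) ?_ (by linarith)
    push_cast
    nlinarith [mul_nonneg (m.cast_nonneg (α := ℝ)) (n.cast_nonneg (α := ℝ))]
  rw [lintegral_dA_radial_mul (ρ := fun t => t ^ n * (1 - t) ^ s) (u := fun z => ‖g z‖ ^ 2)
    ((continuousOn_pow n).mul ((continuousOn_const.sub continuousOn_id).rpow_const
      fun t ht => Or.inl (sub_pos.2 ht.2).ne'))
    (fun t ht => mul_nonneg (pow_nonneg ht.1 n) (rpow_nonneg (sub_pos.2 ht.2).le s))
    (hg.continuousOn.norm.pow 2) fun z _ => by positivity]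
  calc ENNReal.ofReal (C * c * ((m : ℝ) + 1) ^ (-(1 + s)) * ((n : ℝ) + 1) ^ (-(1 + s)))
      ≤ ENNReal.ofReal C * ENNReal.ofReal (c * (((n + m : ℕ) : ℝ) + 1) ^ (-(1 + s))) := by
        rw [← ENNReal.ofReal_mul hC.le, mul_assoc, mul_assoc, ← mul_rpow (by positivity)
          (by positivity)]
        gcongr
    _ ≤ ENNReal.ofReal C * ∫⁻ t in Ioo (0 : ℝ) 1, ENNReal.ofReal (t ^ (n + m) * (1 - t) ^ s) := by
        gcongr
        exact hcn (n + m)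
    _ ≤ _ := by
        rw [← lintegral_const_mul' _ _ ENNReal.ofReal_ne_top]
        refine setLIntegral_mono' measurableSet_Ioo fun t ht => ?_
        have ht0 := ht.1.le
        have ht1 := (sub_pos.2 ht.2).le
        rw [← ENNReal.ofReal_mul hC.le,
          show C * (t ^ (n + m) * (1 - t) ^ s) = t ^ n * (1 - t) ^ s * (C * t ^ m) by ring]
        gcongr
        exact hCm t ht

theorem exists_mul_rpow_le_eLpNorm_mul_deriv_weightedMonomial_sq {s₁ s₂ : ℝ} (hs : -1 < s₁)
    (hg : HolOn g) (hne : ∃ z ∈ ball (0 : ℂ) 1, g z ≠ 0) :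
    ∃ c > 0, ∀ n : ℕ, ENNReal.ofReal (c * ((n : ℝ) + 1) ^ (s₂ - s₁)) ≤
      eLpNorm (fun z => g z * deriv (weightedMonomial s₂ n) z) 2 (moebiusMeasure s₁ 0) ^ 2 := by
  obtain ⟨c, hc, hcn⟩ := exists_mul_rpow_le_lintegral_pow_mul_norm_sq hs hg hne
  refine ⟨c, hc, fun n => ?_⟩
  have hN : (0 : ℝ) < (n : ℝ) + 1 := by positivity
  have hexp : c * ((n : ℝ) + 1) ^ (s₂ - s₁) =
      ((n : ℝ) + 1) ^ (1 + s₂) * (c * ((n : ℝ) + 1) ^ (-(1 + s₁))) := by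
    rw [mul_left_comm, ← rpow_add hN]
    ring_nf
  have hphi : ∀ z, ‖phi 0 z‖ = ‖z‖ := fun z => by simp [phi]
  rw [hexp, ENNReal.ofReal_mul (by positivity), eLpNorm_two_moebiusMeasure_sq]
  refine (mul_le_mul_right (hcn n) _).trans_eq ?_
  rw [← lintegral_const_mul' _ _ ENNReal.ofReal_ne_top]
  refine lintegral_congr fun z => ?_
  rw [← ENNReal.ofReal_mul (by positivity), norm_mul, mul_pow, norm_deriv_weightedMonomial_sq,
    hphi]
  ring_nf

theorem eqOn_zero_of_forall_memLp_mul_deriv_of_le_one {s₁ s₂ : ℝ} (hs₁ : -1 < s₁) (hs₁₂ : s₁ < s₂)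
    (h₀ : 0 ≤ s₂) (h₁ : s₂ ≤ 1) (hg : HolOn g)
    (H : ∀ f ∈ Qs s₂ ∩ Hinf, MemLp (fun z => g z * deriv f z) 2 (moebiusMeasure s₁ 0)) :
    EqOn g 0 (ball 0 1) := by
  intro z hz
  by_contra hgz
  obtain ⟨K, hK⟩ := exists_forall_eLpNorm_mul_deriv_le H (holOn_weightedMonomial s₂)
    (fun n z => norm_weightedMonomial_le_one h₁ n)
    (C := 2) fun n a => eLpNorm_deriv_weightedMonomial_le_two h₀ h₁ n
  obtain ⟨c, hc, hcn⟩ := exists_mul_rpow_le_eLpNorm_mul_deriv_weightedMonomial_sq hs₁ hg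
    ⟨z, hz, hgz⟩
  have htop : Tendsto (fun n : ℕ => c * ((n : ℝ) + 1) ^ (s₂ - s₁)) atTop atTop :=
    ((tendsto_rpow_atTop (sub_pos.2 hs₁₂)).comp
      (tendsto_atTop_add_const_right _ 1 tendsto_natCast_atTop_atTop)).const_mul_atTop hc
  obtain ⟨n, hn⟩ := (htop.eventually_gt_atTop ((K : ℝ) ^ 2)).exists
  refine hn.not_ge ((ENNReal.ofReal_le_ofReal_iff (by positivity)).1 ?_)
  calc ENNReal.ofReal (c * ((n : ℝ) + 1) ^ (s₂ - s₁))
      ≤ (K : ENNReal) ^ 2 := (hcn n).trans (pow_le_pow_left₀ zero_le (hK n) 2)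
    _ = ENNReal.ofReal ((K : ℝ) ^ 2) := by
        rw [ENNReal.ofReal_pow K.coe_nonneg, ENNReal.ofReal_coe_nnreal]

end LowerBound

section Operators

variable {f g : ℂ → ℂ} {s₁ s₂ : ℝ}

theorem hasDerivAt_Ig (hf : HolOn f) (hg : HolOn g) {z : ℂ} (hz : z ∈ ball (0 : ℂ) 1) :
    HasDerivAt (Ig g f) (g z * deriv f z) z :=
  hasDerivAt_integral_segment (DifferentiableOn.mul hg (DifferentiableOn.deriv hf isOpen_ball)) hz

theorem memLp_mul_deriv_of_Ig_mem_Qs (hf : HolOn f) (hg : HolOn g) (h : Ig g f ∈ Qs s₁) {a : ℂ}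
    (ha : a ∈ ball (0 : ℂ) 1) : MemLp (fun z => g z * deriv f z) 2 (moebiusMeasure s₁ a) :=
  (memLp_deriv_of_mem_Qs h ha).ae_eq
    (ae_moebiusMeasure_of_forall_mem_ball fun _ hz => (hasDerivAt_Ig hf hg hz).deriv)

theorem memLp_mul_deriv_of_Mg_mem_Qs (hf : f ∈ Hinf) (hg : g ∈ Qs s₁) (h : Mg g f ∈ Qs s₁) {a : ℂ}
    (ha : a ∈ ball (0 : ℂ) 1) : MemLp (fun z => g z * deriv f z) 2 (moebiusMeasure s₁ a) := by
  obtain ⟨hf, C, hC⟩ := hf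
  have hdg : MemLp (fun z => deriv g z * f z) 2 (moebiusMeasure s₁ a) :=
    (memLp_deriv_of_mem_Qs hg ha).of_le_mul (c := C) (aestronglyMeasurable_moebiusMeasure
      ((continuousOn_deriv_of_holOn hg.1).mul hf.continuousOn))
      (ae_moebiusMeasure_of_forall_mem_ball fun z hz => by
        rw [norm_mul, mul_comm]
        exact mul_le_mul_of_nonneg_right (hC z hz) (norm_nonneg _))
  refine ((memLp_deriv_of_mem_Qs h ha).sub hdg).ae_eq
    (ae_moebiusMeasure_of_forall_mem_ball fun z hz => ?_)
  have hprod : HasDerivAt (Mg g f) (deriv g z * f z + g z * deriv f z) z :=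
    (hg.1.hasDerivAt (isOpen_ball.mem_nhds hz)).mul (hf.hasDerivAt (isOpen_ball.mem_nhds hz))
  rw [Pi.sub_apply, hprod.deriv, add_sub_cancel_left]

theorem mapsInto_Ig_of_eqOn_zero (hg : EqOn g 0 (ball 0 1)) (X : Set (ℂ → ℂ)) :
    MapsInto (Ig g) X (Qs s₁) := fun f _ => by
  refine mem_Qs_of_eqOn_const (c := 0) fun z hz => ?_
  have hzero : EqOn (fun t : ℝ => g (t * z) * deriv f (t * z)) 0 (uIcc 0 1) := fun t ht => by
    rw [uIcc_of_le zero_le_one] at ht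
    have : (t : ℂ) * z ∈ ball (0 : ℂ) 1 := by
      rw [mem_ball_zero_iff, norm_mul, norm_real, norm_of_nonneg ht.1]
      exact mul_lt_one_of_nonneg_of_lt_one_right ht.2 (norm_nonneg z) (mem_ball_zero_iff.1 hz)
    simp [hg this]
  simp [Ig, intervalIntegral.integral_congr hzero]

theorem mapsInto_Mg_of_eqOn_zero (hg : EqOn g 0 (ball 0 1)) (X : Set (ℂ → ℂ)) :
    MapsInto (Mg g) X (Qs s₁) := fun f _ =>
  mem_Qs_of_eqOn_const (c := 0) fun z hz => by simp [Mg, hg hz]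

theorem eqOn_zero_of_forall_memLp_mul_deriv (hs₁ : s₁ < 1) (hs₂ : 0 < s₂) (hs₁₂ : s₁ < s₂)
    (hg : HolOn g)
    (H : ∀ f ∈ Qs s₂ ∩ Hinf, MemLp (fun z => g z * deriv f z) 2 (moebiusMeasure s₁ 0)) :
    EqOn g 0 (ball 0 1) := by
  refine eqOn_zero_of_forall_memLp_mul_deriv_of_le_one (s₁ := max s₁ 0) (s₂ := min s₂ 1)
    (by simp) (by simp [*]) (by simp [hs₂.le]) (min_le_right _ _) hg fun f hf => ?_
  exact (H f ⟨Qs_mono (min_le_left _ _) hf.1, hf.2⟩).mono_measure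
    (moebiusMeasure_anti (le_max_left _ _) (mem_ball_self one_pos))

end Operators

theorem stmt16_general (s₁ s₂ : ℝ) (hs₁ : s₁ < 1) (hs₂ : 0 < s₂) (hs₁₂ : s₁ < s₂) (g : ℂ → ℂ)
    (hg : HolOn g) :
    (MapsInto (Ig g) (Qs s₂) (Qs s₁) ↔ ∀ z ∈ ball (0 : ℂ) 1, g z = 0) ∧
    (MapsInto (Mg g) (Qs s₂) (Qs s₁) ↔ ∀ z ∈ ball (0 : ℂ) 1, g z = 0) := by
  have h0 : (0 : ℂ) ∈ ball (0 : ℂ) 1 := mem_ball_self one_pos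
  refine ⟨⟨fun h => ?_, fun h => mapsInto_Ig_of_eqOn_zero h _⟩,
    ⟨fun h => ?_, fun h => mapsInto_Mg_of_eqOn_zero h _⟩⟩
  · exact eqOn_zero_of_forall_memLp_mul_deriv hs₁ hs₂ hs₁₂ hg fun f hf =>
      memLp_mul_deriv_of_Ig_mem_Qs hf.1.1 hg (h f hf.1) h0
  · have hone : Mg g 1 ∈ Qs s₁ := h 1 (mem_Qs_of_eqOn_const (c := 1) fun _ _ => rfl)
    have hgQ : g ∈ Qs s₁ := by
      rwa [show Mg g 1 = g from funext fun z => mul_one (g z)] at hone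
    exact eqOn_zero_of_forall_memLp_mul_deriv hs₁ hs₂ hs₁₂ hg fun f hf =>
      memLp_mul_deriv_of_Mg_mem_Qs hf.2 hgQ (h f hf.1) h0

/-- For `0 < s₁ < s₂ ≤ 1` and `g` holomorphic on the unit disc, the
following are equivalent: (i) `I_g` maps `Q_{s₂}` into `Q_{s₁}`; (ii) `M_g` maps
`Q_{s₂}` into `Q_{s₁}`; (iii) `g ≡ 0` (on the disc). -/
theorem stmt16 (s₁ s₂ : ℝ) (hs0 : 0 < s₁) (hs12 : s₁ < s₂) (hs2 : s₂ ≤ 1)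
    (g : ℂ → ℂ) (hg : HolOn g) :
    (MapsInto (Ig g) (Qs s₂) (Qs s₁) ↔ ∀ z ∈ Metric.ball (0:ℂ) 1, g z = 0) ∧
    (MapsInto (Mg g) (Qs s₂) (Qs s₁) ↔ ∀ z ∈ Metric.ball (0:ℂ) 1, g z = 0) :=
  stmt16_general s₁ s₂ (hs12.trans_le hs2) (hs0.trans hs12) hs12 g hg
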